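/- Let Ψ be either the class of all forests or the class of all bipartite graphs, let α, β be reals with 2 < α ≤ 3 and 4α − β = 6, and let G be a minimal counterexample for Ψ, α, β. Then for no vertex u of G is the subgraph induced on the neighborhood N(u) a complete graph. -/

import Mathlib

/-!
A vertex `u` with a complete neighbourhood in a minimal counterexample `G` on `n` vertices leads to
a contradiction in every case.

If `n = 4`, then `0 < 4α - |E| - β = 6 - |E|`, so `G` is not complete, and the two vertices
outside a nonadjacent pair form a cut; a graph on at most two vertices is a forest and is bipartite.
If `n ≥ 5` and `deg u ≤ 2`, then `N(u)` is such a cut, separating `u` from the rest.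

If `n ≥ 5` and `deg u ≥ 3`, deleting `u` changes the quality by `deg u - α ≥ 0`, so minimality gives
a `Ψ`-cut of `G - u`. The clique `N(u)` cannot meet both sides of that cut, so `u` can be added to
a side that contains all the neighbours of `u` outside the cut, which gives a `Ψ`-cut of `G`.
-/


open SimpleGraph

/-- `M` is a vertex cut of `G`: the complement of `M` can be partitioned into two nonempty
sets `L`, `R` with no edge of `G` joining a vertex of `L` to a vertex of `R`. -/
def IsVertexCut {V : Type*} (G : SimpleGraph V) (M : Set V) : Prop :=
  ∃ L R : Set V, L.Nonempty ∧ R.Nonempty ∧ Disjoint L R ∧ L ∪ R = Mᶜ ∧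
    ∀ x ∈ L, ∀ y ∈ R, ¬ G.Adj x y

/-- `(M, L, R)` is a separation of `G`. -/
def IsSeparation {V : Type*} (G : SimpleGraph V) (M L R : Set V) : Prop :=
  L.Nonempty ∧ R.Nonempty ∧ M ∪ L ∪ R = Set.univ ∧
  Disjoint M L ∧ Disjoint M R ∧ Disjoint L R ∧
  ∀ x ∈ L, ∀ y ∈ R, ¬ G.Adj x y

/-- The quality function `q_{α,β}(G) = α|V(G)| − |E(G)| − β`. -/
noncomputable def quality {V : Type*} (α β : ℝ) (G : SimpleGraph V) : ℝ :=
  α * Nat.card V - Nat.card G.edgeSet - β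

/-- degree of a vertex as the cardinality of its neighbor set. -/
noncomputable def vdeg {V : Type*} (G : SimpleGraph V) (v : V) : ℕ :=
  (G.neighborSet v).ncard

/-- The class of forests. -/
def ForestClass : ∀ (W : Type), SimpleGraph W → Prop := fun _ H => H.IsAcyclic

/-- The class of bipartite graphs. -/
def BipartiteClass : ∀ (W : Type), SimpleGraph W → Prop := fun _ H => H.Colorable 2

/-- `G` has a `Ψ`-cut: a vertex cut whose induced subgraph lies in `Ψ`. -/
def HasPsiCut (Ψ : ∀ (W : Type), SimpleGraph W → Prop) {V : Type} (G : SimpleGraph V) : Prop :=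
  ∃ M : Set V, IsVertexCut G M ∧ Ψ ↥M (G.induce M)

/-- `G` has a forest cut. -/
def HasForestCut {V : Type*} (G : SimpleGraph V) : Prop :=
  ∃ M : Set V, IsVertexCut G M ∧ (G.induce M).IsAcyclic

/-- `G` has a bipartite cut. -/
def HasBipartiteCut {V : Type*} (G : SimpleGraph V) : Prop :=
  ∃ M : Set V, IsVertexCut G M ∧ (G.induce M).Colorable 2

/-- `G` has an independent cut. -/
def HasIndependentCut {V : Type*} (G : SimpleGraph V) : Prop :=
  ∃ M : Set V, IsVertexCut G M ∧ ∀ x ∈ M, ∀ y ∈ M, ¬ G.Adj x y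

/-- `G` is a minimal counterexample for the class `Ψ` and parameters `α`, `β`. -/
def MinCounterexample (Ψ : ∀ (W : Type), SimpleGraph W → Prop) (α β : ℝ)
    {V : Type} (G : SimpleGraph V) : Prop :=
  4 ≤ Nat.card V ∧ 0 < quality α β G ∧ ¬ HasPsiCut Ψ G ∧
  ∀ (W : Type) (H : SimpleGraph W),
    4 ≤ Nat.card W → Nat.card W < Nat.card V → 0 < quality α β H → HasPsiCut Ψ H

/-- `T0`: a triangle together with an isolated vertex. -/
def graphT0 : SimpleGraph (Fin 4) := SimpleGraph.fromEdgeSet {s(0,1), s(0,2), s(1,2)}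

/-- `T1`: a triangle with an extra vertex joined to exactly one triangle vertex. -/
def graphT1 : SimpleGraph (Fin 4) := SimpleGraph.fromEdgeSet {s(0,1), s(0,2), s(1,2), s(2,3)}

/-- The diamond graph `K4` minus one edge. -/
def diamondGraph : SimpleGraph (Fin 4) := (⊤ : SimpleGraph (Fin 4)).deleteEdges {s(0,1)}

/-- Number of edges of `G` with one endpoint in `X` and the other outside `X`. -/
noncomputable def crossEdges {V : Type*} (G : SimpleGraph V) (X : Set V) : ℕ :=
  {e : Sym2 V | e ∈ G.edgeSet ∧ ∃ x ∈ X, ∃ y ∉ X, e = s(x,y)}.ncard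

/-- Both classes contain every graph on at most two vertices. -/
lemma psi_of_card_le_two {Ψ : ∀ (W : Type), SimpleGraph W → Prop}
    (hΨ : Ψ = ForestClass ∨ Ψ = BipartiteClass) {W : Type} [Finite W] (H : SimpleGraph W)
    (h : Nat.card W ≤ 2) : Ψ W H := by
  have := Fintype.ofFinite W
  rcases hΨ with rfl | rfl
  · apply IsAcyclic.of_card_le_two
    rw [ENat.card_eq_coe_natCard]
    exact_mod_cast h
  · rw [Nat.card_eq_fintype_card] at h
    exact H.colorable_of_fintype.mono h

lemma psi_of_iso {Ψ : ∀ (W : Type), SimpleGraph W → Prop}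
    (hΨ : Ψ = ForestClass ∨ Ψ = BipartiteClass) {W W' : Type} {H : SimpleGraph W}
    {H' : SimpleGraph W'} (f : H ≃g H') (h : Ψ W' H') : Ψ W H := by
  rcases hΨ with rfl | rfl
  · exact f.isAcyclic_iff.mpr h
  · exact Colorable.of_hom f.toHom h

/-- The cut is the set of all vertices other than the two given ones. -/
lemma hasPsiCut_of_card_four {Ψ : ∀ (W : Type), SimpleGraph W → Prop}
    (hΨ : Ψ = ForestClass ∨ Ψ = BipartiteClass) {V : Type} [Fintype V] {G : SimpleGraph V}
    (hV : Nat.card V = 4) {x y : V} (hxy : x ≠ y) (hadj : ¬ G.Adj x y) : HasPsiCut Ψ G := by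
  refine ⟨{x, y}ᶜ, ⟨{x}, {y}, ⟨x, rfl⟩, ⟨y, rfl⟩, by simpa using hxy, ?_, ?_⟩,
    psi_of_card_le_two hΨ _ ?_⟩
  · rw [compl_compl]; rfl
  · rintro _ rfl _ rfl
    exact hadj
  · have h1 := Set.ncard_add_ncard_compl ({x, y} : Set V)
    rw [Set.ncard_pair hxy] at h1
    change Set.ncard _ ≤ 2
    omega

/-- The cut is the neighbourhood of the given vertex of small degree. -/
lemma hasPsiCut_of_degree_le_two {Ψ : ∀ (W : Type), SimpleGraph W → Prop}
    (hΨ : Ψ = ForestClass ∨ Ψ = BipartiteClass) {V : Type} [Fintype V] {G : SimpleGraph V}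
    (hV : 4 ≤ Nat.card V) {u : V} (hu : (G.neighborSet u).ncard ≤ 2) : HasPsiCut Ψ G := by
  refine ⟨G.neighborSet u, ⟨{u}, (insert u (G.neighborSet u))ᶜ, ⟨u, rfl⟩, ?_, ?_, ?_, ?_⟩,
    psi_of_card_le_two hΨ _ hu⟩
  · by_contra h
    rw [Set.not_nonempty_iff_eq_empty, Set.compl_empty_iff] at h
    have h1 := Set.ncard_insert_le u (G.neighborSet u)
    rw [h, Set.ncard_univ] at h1
    omega
  · simp
  · ext v
    by_cases hv : v = u
    · simp [hv]
    · simp [hv]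
  · rintro _ rfl y hy hadj
    exact hy (Or.inr hadj)

/-- Extending one side of a cut of `G - u` by the vertex `u`: this is possible if no neighbour of
`u` lies on the other side. -/
lemma isVertexCut_of_induce_compl {V : Type} {G : SimpleGraph V} {u : V}
    {M L R : Set ↥({u}ᶜ : Set V)} (hL : L.Nonempty) (hR : R.Nonempty) (hLR : Disjoint L R)
    (hM : L ∪ R = Mᶜ) (hadj : ∀ x ∈ L, ∀ y ∈ R, ¬ (G.induce {u}ᶜ).Adj x y)
    (hu : ∀ y ∈ R, ¬ G.Adj u y) : IsVertexCut G (Subtype.val '' M) := by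
  have key : ∀ v (h : v ∈ ({u}ᶜ : Set V)), ((⟨v, h⟩ ∈ L ∨ ⟨v, h⟩ ∈ R) ↔ ⟨v, h⟩ ∉ M) :=
    fun v h => Set.ext_iff.mp hM ⟨v, h⟩
  refine ⟨insert u (Subtype.val '' L), Subtype.val '' R, ⟨u, Or.inl rfl⟩, hR.image _, ?_, ?_, ?_⟩
  · rw [Set.disjoint_insert_left]
    refine ⟨?_, (Set.disjoint_image_iff Subtype.val_injective).mpr hLR⟩
    rintro ⟨x, -, hx⟩
    exact x.2 hx
  · ext v
    by_cases hv : v = u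
    · subst hv
      simp
    · have := key v hv
      simpa [hv] using this
  · rintro x (rfl | ⟨x, hx, rfl⟩) _ ⟨y, hy, rfl⟩
    · exact hu y hy
    · exact hadj x hx y hy

/-- A `Ψ`-cut of `G - u` is a `Ψ`-cut of `G` when the neighbourhood of `u` is a clique. -/
lemma hasPsiCut_of_induce_compl {Ψ : ∀ (W : Type), SimpleGraph W → Prop}
    (hΨ : Ψ = ForestClass ∨ Ψ = BipartiteClass) {V : Type} {G : SimpleGraph V} {u : V}
    (hu : G.IsClique (G.neighborSet u)) (h : HasPsiCut Ψ (G.induce ({u}ᶜ : Set V))) :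
    HasPsiCut Ψ G := by
  obtain ⟨M, ⟨L, R, hL, hR, hLR, hM, hadj⟩, hP⟩ := h
  refine ⟨Subtype.val '' M, ?_, psi_of_iso hΨ (Iso.symm ?_) hP⟩
  · by_cases hc : ∀ y ∈ R, ¬ G.Adj u y
    · exact isVertexCut_of_induce_compl hL hR hLR hM hadj hc
    · push Not at hc
      obtain ⟨y, hy, huy⟩ := hc
      refine isVertexCut_of_induce_compl hR hL hLR.symm (by rw [Set.union_comm, hM])
        (fun a ha b hb hab => hadj b hb a ha hab.symm) fun x hx hux => hadj x hx y hy ?_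
      refine hu hux huy fun hxy => ?_
      rw [Subtype.ext hxy] at hx
      exact Set.disjoint_left.mp hLR hx hy
  · exact ⟨Equiv.Set.image _ M Subtype.val_injective, Iff.rfl⟩

lemma card_edgeSet_induce_compl {V : Type} [Fintype V] (G : SimpleGraph V) (u : V) :
    Nat.card (G.induce ({u}ᶜ : Set V)).edgeSet + (G.neighborSet u).ncard
      = Nat.card G.edgeSet := by
  classical
  have h1 := G.card_edgeFinset_induce_compl_singleton u
  have h2 := G.card_edgeFinset_deleteIncidenceSet u
  have h3 := G.degree_le_card_edgeFinset u
  have h4 : (G.neighborSet u).ncard = G.degree u := by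
    rw [← G.card_neighborSet_eq_degree u, ← Nat.card_eq_fintype_card]
    rfl
  rw [h4, Nat.card_eq_fintype_card, Nat.card_eq_fintype_card, ← edgeFinset_card,
    ← edgeFinset_card]
  omega

/-- in a minimal counterexample, no vertex has a complete neighborhood. -/
theorem stmt13 (Ψ : ∀ (W : Type), SimpleGraph W → Prop)
    (hΨ : Ψ = ForestClass ∨ Ψ = BipartiteClass)
    (α β : ℝ) (hα1 : 2 < α) (hα2 : α ≤ 3) (hβ : 4 * α - β = 6)
    {V : Type} [Fintype V] (G : SimpleGraph V) (hG : MinCounterexample Ψ α β G) :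
    ¬ ∃ u : V, G.induce (G.neighborSet u) = ⊤ := by
  classical
  rintro ⟨u, hu⟩
  rw [induce_eq_top] at hu
  obtain ⟨hV, hq, hcut, hmin⟩ := hG
  unfold quality at hq hmin
  have hdeg : 3 ≤ (G.neighborSet u).ncard := by
    by_contra h
    exact hcut (hasPsiCut_of_degree_le_two hΨ hV (u := u) (by omega))
  have hV5 : Nat.card V ≠ 4 := by
    intro h4
    have htop : G ≠ ⊤ := by
      rintro rfl
      have hE : Nat.card (⊤ : SimpleGraph V).edgeSet = 6 := by
        rw [Nat.card_eq_fintype_card, ← edgeFinset_card, card_edgeFinset_top_eq_card_choose_two,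
          ← Nat.card_eq_fintype_card, h4]
        rfl
      rw [hE, h4] at hq
      push_cast at hq
      linarith
    obtain ⟨x, y, hxy, hadj⟩ := ne_top_iff_exists_not_adj.mp htop
    exact hcut (hasPsiCut_of_card_four hΨ h4 hxy hadj)
  have hcard : Nat.card ↥({u}ᶜ : Set V) + 1 = Nat.card V := by
    have := Set.ncard_add_ncard_compl ({u} : Set V)
    rw [Set.ncard_singleton] at this
    rw [Nat.card_coe_set_eq]
    omega
  refine hcut (hasPsiCut_of_induce_compl hΨ hu (hmin _ _ (by omega) (by omega) ?_))
  have hE := card_edgeSet_induce_compl G u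
  rw [← hE, ← hcard] at hq
  push_cast at hq
  have : (3 : ℝ) ≤ (G.neighborSet u).ncard := by exact_mod_cast hdeg
  linarith
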